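/- Let G = (V,E) be an undirected graph with edge weights w : E → ℤ⁺, let T = Σ_{e∈E} w(e), let d(v) = Σ_{e incident to v} w(e), and let r ∈ ℕ satisfy d(v) + r ≤ 2T for every v ∈ V. Let G' be the graph obtained as follows: for each edge e = {v,u} ∈ E take a fresh copy of the gadget H_{w(e),2T}, writing V_{v,e} for the set X of its H_{w(e)} part and V_{u,e} for the set Y of its H_{w(e)} part; for each vertex v ∈ V and each pair of distinct edges e, e' incident to v, add all edges between V_{v,e} and V_{v,e'}; and for each vertex v ∈ V add a clique C_v on 2T − d(v) − r new vertices, each of which is adjacent to all vertices of V_{v,e} for every edge e incident to v. Then G has an orientation in which, for every vertex v, the total weight of the edges oriented out of v is at most r, if and only if G' has a proper coloring with 2T colors. -/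

import Mathlib

/-!
Fix a colouring of one gadget `H_α`. The clique `Z*` and the added clique use up all `B` colours,
so every other vertex of `H_α` repeats the colour of some `z_j` with `j` in its list. Writing the
list of an odd path vertex `p_{2k-1}` as `{k (low), α + k (high)}`, a low `p_{2k-1}` forces
`p_{2k+1}` to be low through `p_{2k}`; so a path whose first vertex is low has all its odd vertices
low. The edges `p^X_i p^Y_i` forbid both sides to be low at the same place, hence the other path has
all its odd vertices high. With `S^X` and `S^Y` always taking the colours of `z_1, …, z_α`, one of
`X`, `Y` sees at least `2α` colours and the other at least `α` (`gadget_card`). Conversely either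
choice is realised with the `2α` colours of `Z*` (`gadgetColor_proper`, `gadgetColor_lt`).

Orient an edge away from the endpoint whose side sees `2 w(e)` colours. The colours seen by a vertex
`v` in its gadgets then number at least `d(v) + out(v)`, while the clique `C_v` needs
`2T - d(v) - r` further colours: since the sets involved are pairwise disjoint in a proper
colouring, `out(v) ≤ r`. In the other direction the edges receive disjoint palettes of sizes
`2 w(e)`, which exactly fit into `2T` colours, and the same count leaves enough colours for every
`C_v`.
-/


section Gadget

variable (α : ℕ)

/-- Vertices of the gadget `H_α`: the clique `Z* = {z₁,…,z_{2α}}` (left summand), the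
path vertices `p^U_1,…,p^U_{2α−1}` for `U ∈ {X (true), Y (false)}` (middle summand,
0-indexed), and the independent set vertices `s^U_1,…,s^U_α` (right summand). -/
abbrev HVert : Type := Fin (2 * α) ⊕ ((Fin (2 * α - 1) × Bool) ⊕ (Fin α × Bool))

/-- The list `f(p^U_i)` of a path vertex (with `i` the 0-based index). -/
def pathList (i : Fin (2 * α - 1)) : Set ℕ :=
  if ((i : ℕ) + 1) % 2 = 1 then {((i : ℕ) + 2) / 2, α + ((i : ℕ) + 2) / 2}
  else {((i : ℕ) + 1) / 2, α + ((i : ℕ) + 1) / 2 + 1}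

/-- The relation generating the edges of `H_α`. -/
def HRel : HVert α → HVert α → Prop
  | Sum.inl _, Sum.inl _ => True
  | Sum.inr (Sum.inl (i, u)), Sum.inr (Sum.inl (j, u')) =>
      (u = u' ∧ (j : ℕ) = (i : ℕ) + 1) ∨ (u ≠ u' ∧ i = j ∧ ((i : ℕ) + 1) % 2 = 1)
  | Sum.inr (Sum.inl (i, _)), Sum.inl t => ((t : ℕ) + 1) ∉ pathList α i
  | Sum.inr (Sum.inr (i, _)), Sum.inl t => (t : ℕ) ≠ (i : ℕ)
  | _, _ => False

/-- The set `X = S^X ∪ {p^X_i : i odd}` of `H_α`. -/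
def Xset : Set (HVert α) :=
  {x | (∃ i : Fin α, x = Sum.inr (Sum.inr (i, true))) ∨
       (∃ i : Fin (2 * α - 1), ((i : ℕ) + 1) % 2 = 1 ∧ x = Sum.inr (Sum.inl (i, true)))}

/-- The set `Y = S^Y ∪ {p^Y_i : i odd}` of `H_α`. -/
def Yset : Set (HVert α) :=
  {x | (∃ i : Fin α, x = Sum.inr (Sum.inr (i, false))) ∨
       (∃ i : Fin (2 * α - 1), ((i : ℕ) + 1) % 2 = 1 ∧ x = Sum.inr (Sum.inl (i, false)))}

variable (B : ℕ)

/-- Vertices of `H_{α,B}`: the gadget `H_α` together with a clique on `B − 2α` new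
vertices, each adjacent to all vertices of `H_α`. -/
abbrev HBVert : Type := HVert α ⊕ Fin (B - 2 * α)

/-- The relation generating the edges of `H_{α,B}`. -/
def HBRel : HBVert α B → HBVert α B → Prop
  | Sum.inl x, Sum.inl y => HRel α x y
  | _, _ => True

end Gadget

section Reduction

variable {V : Type*} [Fintype V] [LinearOrder V] (G : SimpleGraph V) [DecidableRel G.Adj]
  (w : Sym2 V → ℕ)

/-- The edges of `G`, each represented once by its ordered pair of endpoints. -/
abbrev OrdEdge : Type _ := {p : V × V // G.Adj p.1 p.2 ∧ p.1 < p.2}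

/-- The weight of an edge. -/
def edgeWeight (e : OrdEdge G) : ℕ := w s(e.val.1, e.val.2)

/-- The total weight `T` of all edges of `G`. -/
def totalWeight : ℕ := ∑ e ∈ G.edgeFinset, w e

/-- The weighted degree `d(v)` of a vertex of `G`. -/
def wDeg (v : V) : ℕ := ∑ u ∈ G.neighborFinset v, w s(v, u)

/-- Vertices of `G'`: for each edge `e` of `G` a copy of the gadget `H_{w(e),2T}`
(left summand), and for each vertex `v` the clique `C_v` on `2T − d(v) − r` vertices
(right summand). -/
abbrev RedVert (r : ℕ) : Type _ :=
  (Σ e : OrdEdge G, HBVert (edgeWeight G w e) (2 * totalWeight G w)) ⊕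
    (Σ v : V, Fin (2 * totalWeight G w - wDeg G w v - r))

/-- The gadget vertex `x` of the gadget of the edge `e` lies in the set `V_{v,e}`,
i.e. either `v` is the smaller endpoint of `e` and `x` belongs to the set `X` of
`H_{w(e)}`, or `v` is the larger endpoint and `x` belongs to `Y`. -/
def belongsTo (v : V) (e : OrdEdge G)
    (x : HBVert (edgeWeight G w e) (2 * totalWeight G w)) : Prop :=
  (v = e.val.1 ∧ ∃ y ∈ Xset (edgeWeight G w e), x = Sum.inl y) ∨
  (v = e.val.2 ∧ ∃ y ∈ Yset (edgeWeight G w e), x = Sum.inl y)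

/-- The graph `G'`: the disjoint union of the gadgets `H_{w(e),2T}`, with all edges
added between `V_{v,e}` and `V_{v,e'}` for distinct edges `e, e'` incident to a common
vertex `v`, and with the cliques `C_v` whose vertices are adjacent to all vertices of
`V_{v,e}` for every edge `e` incident to `v`. -/
def colGraph (r : ℕ) : SimpleGraph (RedVert G w r) :=
  SimpleGraph.fromRel (fun a b =>
    match a, b with
    | Sum.inl p, Sum.inl q =>
        (∃ h : p.1 = q.1, HBRel (edgeWeight G w q.1) (2 * totalWeight G w) (h ▸ p.2) q.2) ∨
        (p.1 ≠ q.1 ∧ ∃ v : V, belongsTo G w v p.1 p.2 ∧ belongsTo G w v q.1 q.2)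
    | Sum.inl p, Sum.inr c => belongsTo G w c.1 p.1 p.2
    | Sum.inr c, Sum.inr c' => c.1 = c'.1
    | Sum.inr _, Sum.inl _ => False)

/-! ### Colourings of a single gadget -/

/-- The colour (an index into `Z*`) of a vertex of `H_α` when the side `b` is the one that uses all
`2α` colours: odd path vertices (even 0-based index) are high on side `b`, low on the other one. -/
def gadgetColorNat (α : ℕ) (b : Bool) : HVert α → ℕ
  | Sum.inl t => t
  | Sum.inr (Sum.inl (i, u)) =>
      if (i : ℕ) % 2 = 0 then (if u = b then α + (i : ℕ) / 2 else (i : ℕ) / 2)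
      else (if u = b then (i : ℕ) / 2 else α + ((i : ℕ) + 1) / 2)
  | Sum.inr (Sum.inr (i, _)) => i

lemma gadgetColorNat_lt (α : ℕ) (b : Bool) (x : HVert α) : gadgetColorNat α b x < 2 * α := by
  rcases x with t | ⟨i, u⟩ | ⟨i, u⟩
  · exact t.2
  · have := i.2
    simp only [gadgetColorNat]
    split_ifs <;> omega
  · have := i.2
    simp only [gadgetColorNat]
    omega

lemma gadgetColor_proper (α : ℕ) (b : Bool) (x y : HVert α) (hxy : x ≠ y) (h : HRel α x y) :
    gadgetColorNat α b x ≠ gadgetColorNat α b y := by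
  rcases x with t | ⟨i, u⟩ | ⟨i, u⟩ <;> rcases y with t' | ⟨j, u'⟩ | ⟨j, u'⟩ <;>
    simp only [HRel] at h
  · simp only [gadgetColorNat]
    intro h'
    exact hxy (by rw [Fin.ext h'])
  · have := i.2
    have := t'.2
    simp only [gadgetColorNat]
    intro h'
    apply h
    unfold pathList
    split_ifs at h' ⊢ <;> simp only [Set.mem_insert_iff, Set.mem_singleton_iff] <;> omega
  · have := i.2
    have := j.2
    simp only [gadgetColorNat]
    rcases h with ⟨rfl, h⟩ | ⟨hu, rfl, h⟩
    · split_ifs <;> omega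
    · have h0 : (i : ℕ) % 2 = 0 := by omega
      rw [if_pos h0, if_pos h0]
      rcases u <;> rcases u' <;> rcases b <;> simp at hu ⊢ <;> omega
  · simp only [gadgetColorNat]
    exact fun h' => h h'.symm

/-- The side of `H_α` selected by `u`: `X` for `true`, `Y` for `false`. -/
def sideSet (α : ℕ) (u : Bool) : Set (HVert α) := if u then Xset α else Yset α

lemma mem_sideSet (α : ℕ) (u : Bool) (x : HVert α) :
    x ∈ sideSet α u ↔ (∃ i : Fin α, x = Sum.inr (Sum.inr (i, u))) ∨
      (∃ i : Fin (2 * α - 1), ((i : ℕ) + 1) % 2 = 1 ∧ x = Sum.inr (Sum.inl (i, u))) := by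
  cases u <;> simp [sideSet, Xset, Yset]

/-- Only the first `α` colours appear on the side opposite to `b`. -/
lemma gadgetColor_lt (α : ℕ) (b u : Bool) (x : HVert α) (hx : x ∈ sideSet α u) (hu : u ≠ b) :
    gadgetColorNat α b x < α := by
  rw [mem_sideSet] at hx
  rcases hx with ⟨i, rfl⟩ | ⟨i, hi, rfl⟩
  · exact i.2
  · have := i.2
    have h0 : (i : ℕ) % 2 = 0 := by omega
    simp only [gadgetColorNat, if_pos h0, if_neg hu]
    omega

section Rigidity

variable {α B : ℕ} (c : HBVert α B → Fin B)

/-- `c` is a proper colouring of `H_{α,B}`. -/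
def GadgetProper : Prop := ∀ x y, x ≠ y → HBRel α B x y → c x ≠ c y

variable {c}

/-- Together, `Z*` and the added clique form a clique on `B` vertices, so `c` maps them onto all
colours; a vertex of `H_α` is adjacent to the added clique and must take the colour of some `z_t`. -/
lemma GadgetProper.exists_z (hc : GadgetProper c) (hB : 2 * α ≤ B) (x : HVert α) :
    ∃ t : Fin (2 * α), c (Sum.inl x) = c (Sum.inl (Sum.inl t)) := by
  let F : Fin (2 * α) ⊕ Fin (B - 2 * α) → Fin B :=
    Sum.elim (fun t => c (Sum.inl (Sum.inl t))) (fun k => c (Sum.inr k))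
  have hF : Function.Injective F := by
    rintro (t | k) (t' | k') h <;> by_contra hne
    · exact hc (Sum.inl (Sum.inl t)) (Sum.inl (Sum.inl t')) (by simpa using hne) trivial h
    · exact hc (Sum.inl (Sum.inl t)) (Sum.inr k') (by simp) trivial h
    · exact hc (Sum.inr k) (Sum.inl (Sum.inl t')) (by simp) trivial h
    · exact hc (Sum.inr k) (Sum.inr k') (by simpa using hne) trivial h
  have hS : Function.Surjective F :=
    ((Fintype.bijective_iff_injective_and_card F).2 ⟨hF, by simp; omega⟩).2
  obtain ⟨t | k, h⟩ := hS (c (Sum.inl x))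
  · exact ⟨t, h.symm⟩
  · exact absurd h (hc (Sum.inr k) (Sum.inl x) (by simp) trivial)

lemma GadgetProper.z_injective (hc : GadgetProper c) :
    Function.Injective fun t : Fin (2 * α) => c (Sum.inl (Sum.inl t)) := by
  intro t t' h
  by_contra hne
  exact hc (Sum.inl (Sum.inl t)) (Sum.inl (Sum.inl t')) (by simpa using hne) trivial h

lemma GadgetProper.s_color (hc : GadgetProper c) (hB : 2 * α ≤ B) (i : Fin α) (u : Bool) :
    c (Sum.inl (Sum.inr (Sum.inr (i, u)))) = c (Sum.inl (Sum.inl ⟨i, by omega⟩)) := by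
  obtain ⟨t, ht⟩ := hc.exists_z hB (Sum.inr (Sum.inr (i, u)))
  by_cases h : (t : ℕ) = i
  · rw [ht]
    congr
    exact Fin.ext h
  · exact absurd ht (hc _ _ (by simp) h)

lemma GadgetProper.p_color (hc : GadgetProper c) (hB : 2 * α ≤ B) (i : Fin (2 * α - 1)) (u : Bool) :
    ∃ t : Fin (2 * α), (t : ℕ) + 1 ∈ pathList α i ∧
      c (Sum.inl (Sum.inr (Sum.inl (i, u)))) = c (Sum.inl (Sum.inl t)) := by
  obtain ⟨t, ht⟩ := hc.exists_z hB (Sum.inr (Sum.inl (i, u)))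
  refine ⟨t, ?_, ht⟩
  by_contra h
  exact absurd ht (hc _ _ (by simp) h)

/-- The `k`-th odd path vertex (`k` counted from `0`) of side `u` has its low colour. -/
def IsLow (c : HBVert α B → Fin B) (u : Bool) (k : Fin α) : Prop :=
  c (Sum.inl (Sum.inr (Sum.inl (⟨2 * k, by omega⟩, u)))) = c (Sum.inl (Sum.inl ⟨k, by omega⟩))

lemma GadgetProper.high_of_not_low (hc : GadgetProper c) (hB : 2 * α ≤ B) (u : Bool) (k : Fin α)
    (h : ¬ IsLow c u k) :
    c (Sum.inl (Sum.inr (Sum.inl (⟨2 * k, by omega⟩, u)))) =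
      c (Sum.inl (Sum.inl ⟨α + k, by omega⟩)) := by
  obtain ⟨t, ht, hct⟩ := hc.p_color hB ⟨2 * k, by omega⟩ u
  have h1 : (2 * (k : ℕ) + 1) % 2 = 1 := by omega
  simp only [pathList, h1, if_true, Set.mem_insert_iff, Set.mem_singleton_iff] at ht
  rcases ht with ht | ht
  · exfalso
    apply h
    have : t = ⟨k, by omega⟩ := Fin.ext (by simp; omega)
    rw [IsLow, hct, this]
  · have : t = ⟨α + k, by omega⟩ := Fin.ext (by simp; omega)
    rw [hct, this]

lemma GadgetProper.low_succ (hc : GadgetProper c) (hB : 2 * α ≤ B) (u : Bool) (k : ℕ)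
    (hk : k + 1 < α) (h : IsLow c u ⟨k, by omega⟩) : IsLow c u ⟨k + 1, hk⟩ := by
  by_contra hn
  have hhigh := hc.high_of_not_low hB u _ hn
  -- the even path vertex between the two has both colours of its list forbidden
  obtain ⟨t, ht, hct⟩ := hc.p_color hB ⟨2 * k + 1, by omega⟩ u
  have h1 : ¬ (2 * k + 1 + 1) % 2 = 1 := by omega
  simp only [pathList, h1, if_false, Set.mem_insert_iff, Set.mem_singleton_iff] at ht
  rcases ht with ht | ht
  · have ht' : t = ⟨k, by omega⟩ := Fin.ext (by simp; omega)
    refine hc (Sum.inl (Sum.inr (Sum.inl (⟨2 * k, by omega⟩, u))))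
      (Sum.inl (Sum.inr (Sum.inl (⟨2 * k + 1, by omega⟩, u)))) (by simp) ?_ ?_
    · exact Or.inl ⟨rfl, rfl⟩
    · exact (h.trans (by rw [← ht'])).trans hct.symm
  · have ht' : t = ⟨α + (k + 1), by omega⟩ := Fin.ext (by simp; omega)
    refine hc (Sum.inl (Sum.inr (Sum.inl (⟨2 * k + 1, by omega⟩, u))))
      (Sum.inl (Sum.inr (Sum.inl (⟨2 * (k + 1), by omega⟩, u)))) (by simp; omega) ?_ ?_
    · exact Or.inl ⟨rfl, by simp; omega⟩
    · exact (hct.trans (by rw [← ht'])).trans hhigh.symm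

lemma GadgetProper.low_all (hc : GadgetProper c) (hB : 2 * α ≤ B) (hα : 0 < α) (u : Bool)
    (h : IsLow c u ⟨0, hα⟩) (k : ℕ) (hk : k < α) : IsLow c u ⟨k, hk⟩ := by
  induction k with
  | zero => exact h
  | succ k ih => exact hc.low_succ hB u k hk (ih (by omega))

lemma GadgetProper.not_both_low (hc : GadgetProper c) (k : Fin α) :
    ¬ (IsLow c true k ∧ IsLow c false k) := by
  rintro ⟨h1, h2⟩
  refine hc (Sum.inl (Sum.inr (Sum.inl (⟨2 * k, by omega⟩, true))))
      (Sum.inl (Sum.inr (Sum.inl (⟨2 * k, by omega⟩, false)))) (by simp) ?_ (h1.trans h2.symm)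
  refine Or.inr ⟨by simp, rfl, ?_⟩
  simp only
  omega

lemma GadgetProper.low_of_not_low (hc : GadgetProper c) (hB : 2 * α ≤ B) (k : Fin α)
    (h : ¬ IsLow c true k) : IsLow c false k := by
  by_contra h'
  refine hc (Sum.inl (Sum.inr (Sum.inl (⟨2 * k, by omega⟩, true))))
      (Sum.inl (Sum.inr (Sum.inl (⟨2 * k, by omega⟩, false)))) (by simp) ?_
      ((hc.high_of_not_low hB _ _ h).trans (hc.high_of_not_low hB _ _ h').symm)
  refine Or.inr ⟨by simp, rfl, ?_⟩
  simp only
  omega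

/-- One of the two sides has all its odd path vertices high. -/
lemma GadgetProper.exists_high (hc : GadgetProper c) (hB : 2 * α ≤ B) (hα : 0 < α) :
    ∃ u : Bool, ∀ k : Fin α, ¬ IsLow c u k := by
  by_cases h : IsLow c true ⟨0, hα⟩
  · exact ⟨false, fun k hk => hc.not_both_low k ⟨hc.low_all hB hα true h k k.2, hk⟩⟩
  · exact ⟨true, fun k hk => hc.not_both_low k
      ⟨hk, hc.low_all hB hα false (hc.low_of_not_low hB _ h) k k.2⟩⟩

open Classical in
/-- The colours appearing on side `u`. -/
noncomputable def sideColors (c : HBVert α B → Fin B) (u : Bool) : Finset (Fin B) :=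
  Finset.univ.filter fun k => ∃ x ∈ sideSet α u, c (Sum.inl x) = k

lemma mem_sideColors (u : Bool) (k : Fin B) :
    k ∈ sideColors c u ↔ ∃ x ∈ sideSet α u, c (Sum.inl x) = k := by
  simp [sideColors]

lemma GadgetProper.s_mem (hc : GadgetProper c) (hB : 2 * α ≤ B) (u : Bool) (k : ℕ) (hk : k < α) :
    c (Sum.inl (Sum.inl ⟨k, by omega⟩)) ∈ sideColors c u := by
  rw [mem_sideColors]
  exact ⟨_, (mem_sideSet _ _ _).2 (Or.inl ⟨⟨k, hk⟩, rfl⟩),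
    hc.s_color hB ⟨k, hk⟩ u⟩

/-- Every side sees at least `α` colours, and some side sees at least `2α`. -/
lemma gadget_card (hc : GadgetProper c) (hB : 2 * α ≤ B) (hα : 0 < α) :
    (∀ u, α ≤ (sideColors c u).card) ∧ ∃ u, 2 * α ≤ (sideColors c u).card := by
  constructor
  · intro u
    have hinj : Function.Injective
        fun i : Fin α => c (Sum.inl (Sum.inl (⟨i, by omega⟩ : Fin (2 * α)))) := fun i j h => by
      have := hc.z_injective h
      exact Fin.ext (by simpa using this)
    have := Finset.card_le_card_of_injOn (s := (Finset.univ : Finset (Fin α)))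
      (t := sideColors c u) _ (fun i _ => hc.s_mem hB u i i.2) hinj.injOn
    simpa using this
  · obtain ⟨u, hu⟩ := hc.exists_high hB hα
    refine ⟨u, ?_⟩
    have := Finset.card_le_card_of_injOn (s := (Finset.univ : Finset (Fin (2 * α))))
      (t := sideColors c u) (fun t => c (Sum.inl (Sum.inl t))) (fun t _ => ?_)
      hc.z_injective.injOn
    · simpa using this
    · by_cases ht : (t : ℕ) < α
      · exact hc.s_mem hB u t ht
      · have h2 := t.2
        have h := hc.high_of_not_low hB u ⟨t - α, by omega⟩ (hu _)
        rw [Finset.mem_coe, mem_sideColors]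
        refine ⟨_, (mem_sideSet _ _ _).2 (Or.inr ⟨_, ?_, rfl⟩), h.trans ?_⟩
        · simp only
          omega
        · congr
          simp only
          omega

end Rigidity

/-! ### Colourings of the whole graph -/

lemma belongsTo_iff (v : V) (e : OrdEdge G)
    (x : HBVert (edgeWeight G w e) (2 * totalWeight G w)) :
    belongsTo G w v e x ↔ ∃ u : Bool, v = (if u then e.val.1 else e.val.2) ∧
      ∃ y ∈ sideSet (edgeWeight G w e) u, x = Sum.inl y := by
  constructor
  · rintro (⟨h, hx⟩ | ⟨h, hx⟩)
    · exact ⟨true, h, hx⟩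
    · exact ⟨false, h, hx⟩
  · rintro ⟨u, h, hx⟩
    cases u
    · exact Or.inr ⟨h, hx⟩
    · exact Or.inl ⟨h, hx⟩

/-- The constraints of a proper colouring of `G'`, one for each kind of edge. -/
lemma colGraph_proper_iff (r : ℕ) {K : Type*} (c : RedVert G w r → K) :
    (∀ u v, (colGraph G w r).Adj u v → c u ≠ c v) ↔
      (∀ e x y, x ≠ y → HBRel (edgeWeight G w e) (2 * totalWeight G w) x y →
        c (Sum.inl ⟨e, x⟩) ≠ c (Sum.inl ⟨e, y⟩)) ∧
      (∀ v e e' x y, e ≠ e' → belongsTo G w v e x → belongsTo G w v e' y →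
        c (Sum.inl ⟨e, x⟩) ≠ c (Sum.inl ⟨e', y⟩)) ∧
      (∀ v e x k, belongsTo G w v e x → c (Sum.inl ⟨e, x⟩) ≠ c (Sum.inr ⟨v, k⟩)) ∧
      (∀ v k k', k ≠ k' → c (Sum.inr ⟨v, k⟩) ≠ c (Sum.inr ⟨v, k'⟩)) := by
  constructor
  · intro h
    refine ⟨fun e x y hxy hr => h _ _ ?_, fun v e e' x y he hx hy => h _ _ ?_,
      fun v e x k hx => h _ _ ?_, fun v k k' hk => h _ _ ?_⟩
    · exact ⟨by simpa using hxy, Or.inl (Or.inl ⟨rfl, hr⟩)⟩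
    · exact ⟨fun h' => he (congrArg Sigma.fst (Sum.inl.inj h')), Or.inl (Or.inr ⟨he, v, hx, hy⟩)⟩
    · exact ⟨by simp, Or.inl hx⟩
    · exact ⟨by simpa using hk, Or.inl rfl⟩
  · rintro ⟨hA, hB, hC, hD⟩
    -- the two disjuncts of the symmetrised relation differ by exchanging `a` and `b`
    suffices key : ∀ a b : RedVert G w r, a ≠ b → (match a, b with
      | Sum.inl p, Sum.inl q =>
          (∃ h : p.1 = q.1, HBRel (edgeWeight G w q.1) (2 * totalWeight G w) (h ▸ p.2) q.2) ∨
          (p.1 ≠ q.1 ∧ ∃ v : V, belongsTo G w v p.1 p.2 ∧ belongsTo G w v q.1 q.2)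
      | Sum.inl p, Sum.inr c => belongsTo G w c.1 p.1 p.2
      | Sum.inr c, Sum.inr c' => c.1 = c'.1
      | Sum.inr _, Sum.inl _ => False) → c a ≠ c b from
        fun a b ⟨hab, hr⟩ => hr.elim (key a b hab) fun h => (key b a hab.symm h).symm
    intro a b hab hr'
    rcases a with ⟨e, x⟩ | ⟨v, k⟩ <;> rcases b with ⟨e', y⟩ | ⟨v', k'⟩
    · rcases hr' with ⟨he, h⟩ | ⟨he, v, hx, hy⟩
      · simp only at he
        subst he
        exact hA e x y (by simpa using hab) h
      · exact hB v e e' x y he hx hy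
    · exact hC v' e x k' hr'
    · exact hr'.elim
    · simp only at hr'
      subst hr'
      exact hD v k k' (by simpa using hab)

/-- The edge `vu` as an ordered pair. -/
lemma exists_ordEdge {v u : V} (h : G.Adj v u) :
    ∃ e : OrdEdge G, s(e.val.1, e.val.2) = s(v, u) := by
  rcases lt_or_gt_of_ne h.ne with h' | h'
  · exact ⟨⟨(v, u), h, h'⟩, rfl⟩
  · exact ⟨⟨(u, v), h.symm, h'⟩, Sym2.eq_swap⟩

lemma ordEdge_ext {e e' : OrdEdge G} (h : s(e.val.1, e.val.2) = s(e'.val.1, e'.val.2)) :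
    e = e' := by
  rcases Sym2.eq_iff.1 h with ⟨h1, h2⟩ | ⟨h1, h2⟩
  · exact Subtype.ext (Prod.ext h1 h2)
  · have := e.2.2
    rw [h1, h2] at this
    exact absurd this e'.2.2.not_gt

lemma sum_edgeWeight : ∑ e : OrdEdge G, edgeWeight G w e = totalWeight G w := by
  refine Finset.sum_bij (fun e _ => s(e.val.1, e.val.2)) ?_ ?_ ?_ ?_
  · intro e _
    simpa using e.2.1
  · intro e _ e' _ h
    exact ordEdge_ext G h
  · intro z hz
    induction z with
    | h v u =>
      obtain ⟨e, he⟩ := exists_ordEdge G (by simpa using hz)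
      exact ⟨e, Finset.mem_univ _, he⟩
  · intro e _
    rfl

lemma two_mul_edgeWeight_le (e : OrdEdge G) : 2 * edgeWeight G w e ≤ 2 * totalWeight G w := by
  rw [← sum_edgeWeight]
  exact Nat.mul_le_mul_left _
    (Finset.single_le_sum (f := edgeWeight G w) (fun _ _ => Nat.zero_le _) (Finset.mem_univ e))

/-- Disjoint palettes of sizes `2 w(e)` fit into `2T` colours. -/
lemma exists_palette : Nonempty
    ((Σ e : OrdEdge G, Fin (2 * edgeWeight G w e)) ↪ Fin (2 * totalWeight G w)) := by
  rw [Function.Embedding.nonempty_iff_card_le]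
  simp [← Finset.mul_sum, sum_edgeWeight]

/-- A family of `n` distinct colours outside `S` exists as soon as there is room for it. -/
lemma exists_avoiding {B n : ℕ} (S : Finset (Fin B)) (h : S.card + n ≤ B) :
    ∃ f : Fin n → Fin B, Function.Injective f ∧ ∀ k, f k ∉ S := by
  have : Nonempty (Fin n ↪ {x // x ∈ Sᶜ}) := by
    rw [Function.Embedding.nonempty_iff_card_le]
    simp only [Fintype.card_fin, Fintype.card_coe, Finset.card_compl]
    omega
  obtain ⟨f⟩ := this
  exact ⟨fun k => f k, fun i j h => f.injective (Subtype.ext h),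
    fun k => Finset.mem_compl.1 (f k).2⟩

lemma wDeg_add_out (σ : V → V → Bool) (v : V) :
    ∑ u ∈ G.neighborFinset v, (if σ v u then 2 * w s(v, u) else w s(v, u)) =
      wDeg G w v + ∑ u ∈ G.neighborFinset v, (if σ v u then w s(v, u) else 0) := by
  rw [wDeg, ← Finset.sum_add_distrib]
  refine Finset.sum_congr rfl fun u _ => ?_
  split_ifs <;> omega

/-! ### From orientations to colourings -/

lemma exists_coloring (r : ℕ)
    (hcap : ∀ v : V, wDeg G w v + r ≤ 2 * totalWeight G w) (σ : V → V → Bool)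
    (hσ : ∀ u v, G.Adj u v → σ u v = ! σ v u)
    (hout : ∀ v : V, ∑ u ∈ G.neighborFinset v, (if σ v u then w s(v, u) else 0) ≤ r) :
    ∃ c : RedVert G w r → Fin (2 * totalWeight G w),
      ∀ u v, (colGraph G w r).Adj u v → c u ≠ c v := by
  classical
  obtain ⟨φ⟩ := exists_palette G w
  -- colours of the cliques added inside the gadgets
  have hψ : ∀ e : OrdEdge G,
      ∃ f : Fin (2 * totalWeight G w - 2 * edgeWeight G w e) → Fin (2 * totalWeight G w),
        Function.Injective f ∧ ∀ k, f k ∉ Finset.univ.image fun j => φ ⟨e, j⟩ := by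
    intro e
    apply exists_avoiding
    have h1 := two_mul_edgeWeight_le G w e
    have h2 := Finset.card_image_le (s := Finset.univ)
      (f := fun j : Fin (2 * edgeWeight G w e) => φ ⟨e, j⟩)
    simp only [Finset.card_univ, Fintype.card_fin] at h2
    omega
  choose ψ hψi hψn using hψ
  -- a superset of the colours seen by `v` in the gadget of the edge `vu`
  let U : V → V → Finset (Fin (2 * totalWeight G w)) := fun v u =>
    Finset.univ.filter fun k => ∃ (e : OrdEdge G) (j : Fin (2 * edgeWeight G w e)),
      s(e.val.1, e.val.2) = s(v, u) ∧
      (j : ℕ) < (if σ v u then 2 * w s(v, u) else w s(v, u)) ∧ φ ⟨e, j⟩ = k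
  have hU : ∀ v u, G.Adj v u →
      (U v u).card ≤ (if σ v u then 2 * w s(v, u) else w s(v, u)) := by
    intro v u h
    obtain ⟨e, he⟩ := exists_ordEdge G h
    have hwe : edgeWeight G w e = w s(v, u) := by rw [edgeWeight, he]
    have hle : (if σ v u then 2 * w s(v, u) else w s(v, u)) ≤ 2 * edgeWeight G w e := by
      rw [hwe]
      split_ifs <;> omega
    have : U v u ⊆ (Finset.univ : Finset (Fin (if σ v u then 2 * w s(v, u) else w s(v, u)))).image
        fun j => φ ⟨e, Fin.castLE hle j⟩ := by
      intro k hk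
      obtain ⟨-, e', j, he', hj, rfl⟩ := Finset.mem_filter.1 hk
      obtain rfl := ordEdge_ext G (he'.trans he.symm)
      exact Finset.mem_image.2 ⟨⟨j, hj⟩, Finset.mem_univ _, rfl⟩
    refine (Finset.card_le_card this).trans (Finset.card_image_le.trans ?_)
    simp
  have hχ : ∀ v : V, ∃ f : Fin (2 * totalWeight G w - wDeg G w v - r) →
      Fin (2 * totalWeight G w), Function.Injective f ∧
        ∀ k, f k ∉ (G.neighborFinset v).biUnion (U v) := by
    intro v
    apply exists_avoiding
    have h1 : ((G.neighborFinset v).biUnion (U v)).card ≤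
        ∑ u ∈ G.neighborFinset v, (if σ v u then 2 * w s(v, u) else w s(v, u)) :=
      Finset.card_biUnion_le.trans
        (Finset.sum_le_sum fun u hu => hU v u ((G.mem_neighborFinset v u).1 hu))
    rw [wDeg_add_out] at h1
    have h2 := hout v
    have h3 := hcap v
    omega
  choose χ hχi hχn using hχ
  let g : (e : OrdEdge G) → HVert (edgeWeight G w e) → Fin (2 * edgeWeight G w e) := fun e y =>
    ⟨gadgetColorNat _ (σ e.val.1 e.val.2) y, gadgetColorNat_lt _ _ _⟩
  let c : RedVert G w r → Fin (2 * totalWeight G w) := fun a =>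
    match a with
    | Sum.inl ⟨e, Sum.inl y⟩ => φ ⟨e, g e y⟩
    | Sum.inl ⟨e, Sum.inr k⟩ => ψ e k
    | Sum.inr ⟨v, k⟩ => χ v k
  have hφψ : ∀ e j k, φ ⟨e, j⟩ ≠ ψ e k := fun e j k h =>
    hψn e k (Finset.mem_image.2 ⟨j, Finset.mem_univ _, h⟩)
  refine ⟨c, (colGraph_proper_iff G w r c).2 ⟨?_, ?_, ?_, ?_⟩⟩
  · rintro e (x | k) (y | k') hxy hr h
    · have h' := φ.injective h
      simp only [Sigma.mk.injEq, heq_eq_eq, true_and] at h'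
      exact gadgetColor_proper _ _ x y (by simpa using hxy) hr (congrArg Fin.val h')
    · exact hφψ _ _ _ h
    · exact hφψ _ _ _ h.symm
    · exact hxy (by rw [hψi e h])
  · intro v e e' x y he hx hy h
    rw [belongsTo_iff] at hx hy
    obtain ⟨_, -, x, -, rfl⟩ := hx
    obtain ⟨_, -, y, -, rfl⟩ := hy
    exact he (congrArg Sigma.fst (φ.injective h))
  · intro v e x k hx h
    rw [belongsTo_iff] at hx
    obtain ⟨b, hv, x, hx, rfl⟩ := hx
    have hadj := e.2.1
    -- `u` is the other endpoint; `v` sees all `2 w(e)` colours only if `vu` points away from it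
    obtain ⟨u, hu, hb⟩ : ∃ u, s(e.val.1, e.val.2) = s(v, u) ∧
        (σ v u = false → b ≠ σ e.val.1 e.val.2) := by
      cases b
      · refine ⟨e.val.1, ?_, ?_⟩
        · rw [hv]
          exact Sym2.eq_swap
        · rw [hσ _ _ hadj, hv]
          intro h
          simp_all
      · refine ⟨e.val.2, ?_, ?_⟩
        · rw [hv]
          rfl
        · rw [hv]
          intro h
          simp_all
    have hwe : edgeWeight G w e = w s(v, u) := by rw [edgeWeight, hu]
    have hvu : G.Adj v u := by
      rw [← SimpleGraph.mem_edgeSet, ← hu]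
      exact hadj
    refine hχn v k (Finset.mem_biUnion.2 ⟨u, (G.mem_neighborFinset v u).2 hvu, ?_⟩)
    refine Finset.mem_filter.2 ⟨Finset.mem_univ _, e, g e x, hu, ?_, h⟩
    split_ifs with hs
    · rw [← hwe]
      exact (g e x).2
    · rw [← hwe]
      exact gadgetColor_lt _ _ b x hx (hb (by simpa using hs))
  · intro v k k' hk h
    exact hk (hχi v h)

/-! ### From colourings to orientations -/

lemma exists_orientation (r : ℕ) (hw : ∀ e ∈ G.edgeSet, 0 < w e)
    (hcap : ∀ v : V, wDeg G w v + r ≤ 2 * totalWeight G w)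
    (c : RedVert G w r → Fin (2 * totalWeight G w))
    (hc : ∀ u v, (colGraph G w r).Adj u v → c u ≠ c v) :
    ∃ σ : V → V → Bool,
      (∀ u v, G.Adj u v → σ u v = ! σ v u) ∧
      (∀ v : V, ∑ u ∈ G.neighborFinset v, (if σ v u then w s(v, u) else 0) ≤ r) := by
  classical
  obtain ⟨hA, hB, hC, hD⟩ := (colGraph_proper_iff G w r c).1 hc
  -- the colours seen by `v` in the gadget of the edge `vu`
  let S : V → V → Finset (Fin (2 * totalWeight G w)) := fun v u =>
    Finset.univ.filter fun k => ∃ (e : OrdEdge G)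
      (x : HBVert (edgeWeight G w e) (2 * totalWeight G w)),
      s(e.val.1, e.val.2) = s(v, u) ∧ belongsTo G w v e x ∧ c (Sum.inl ⟨e, x⟩) = k
  have hside : ∀ e : OrdEdge G, ∀ u : Bool,
      sideColors (fun x => c (Sum.inl ⟨e, x⟩)) u ⊆
        if u then S e.val.1 e.val.2 else S e.val.2 e.val.1 := by
    intro e u k hk
    obtain ⟨x, hx, hxk⟩ := (mem_sideColors _ _).1 hk
    cases u
    · exact Finset.mem_filter.2 ⟨Finset.mem_univ _, e, Sum.inl x, Sym2.eq_swap,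
        (belongsTo_iff G w _ _ _).2 ⟨false, rfl, x, hx, rfl⟩, hxk⟩
    · exact Finset.mem_filter.2 ⟨Finset.mem_univ _, e, Sum.inl x, rfl,
        (belongsTo_iff G w _ _ _).2 ⟨true, rfl, x, hx, rfl⟩, hxk⟩
  have hcard : ∀ v u, G.Adj v u → w s(v, u) ≤ (S v u).card ∧
      (2 * w s(v, u) ≤ (S v u).card ∨ 2 * w s(v, u) ≤ (S u v).card) := by
    intro v u h
    obtain ⟨e, he⟩ := exists_ordEdge G h
    have hwe : edgeWeight G w e = w s(v, u) := by rw [edgeWeight, he]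
    obtain ⟨h1, b, h2⟩ := gadget_card (c := fun x => c (Sum.inl ⟨e, x⟩))
      (hA e) (two_mul_edgeWeight_le G w e)
      (by rw [hwe]; exact hw _ h)
    have h1t := (h1 true).trans (Finset.card_le_card (hside e true))
    have h1f := (h1 false).trans (Finset.card_le_card (hside e false))
    have h2' := h2.trans (Finset.card_le_card (hside e b))
    rw [hwe] at h1t h1f h2'
    rcases Sym2.eq_iff.1 he with ⟨hv, hu⟩ | ⟨hv, hu⟩ <;> rw [hv, hu] at h1t h1f h2' <;>
      cases b <;> simp only [if_true, Bool.false_eq_true, if_false] at h1t h1f h2'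
    · exact ⟨h1t, Or.inr h2'⟩
    · exact ⟨h1t, Or.inl h2'⟩
    · exact ⟨h1f, Or.inl h2'⟩
    · exact ⟨h1f, Or.inr h2'⟩
  let σ : V → V → Bool := fun v u =>
    if v < u then decide (2 * w s(v, u) ≤ (S v u).card)
    else ! decide (2 * w s(v, u) ≤ (S u v).card)
  have hσ : ∀ v u, G.Adj v u →
      (if σ v u then 2 * w s(v, u) else w s(v, u)) ≤ (S v u).card := by
    intro v u h
    obtain ⟨h1, h2⟩ := hcard v u h
    split_ifs with hs
    · by_cases hlt : v < u
      · simpa [σ, hlt] using hs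
      · have : ¬ 2 * w s(v, u) ≤ (S u v).card := by simpa [σ, hlt] using hs
        exact h2.resolve_right this
    · exact h1
  refine ⟨σ, ?_, ?_⟩
  · intro u v h
    rcases lt_or_gt_of_ne h.ne with h' | h'
    · simp [σ, h', h'.not_gt, Sym2.eq_swap (a := v) (b := u)]
    · simp [σ, h', h'.not_gt, Sym2.eq_swap (a := v) (b := u)]
  · intro v
    have hdisj : ((G.neighborFinset v : Finset V) : Set V).PairwiseDisjoint (S v) := by
      intro u _ u' _ hne
      refine Finset.disjoint_left.2 fun k hk hk' => ?_
      obtain ⟨-, e, x, he, hx, hxk⟩ := Finset.mem_filter.1 hk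
      obtain ⟨-, e', x', he', hx', hxk'⟩ := Finset.mem_filter.1 hk'
      refine hB v e e' x x' ?_ hx hx' (hxk.trans hxk'.symm)
      rintro rfl
      exact hne (Sym2.congr_right.1 (he.symm.trans he'))
    let C : Finset (Fin (2 * totalWeight G w)) := Finset.univ.image fun k => c (Sum.inr ⟨v, k⟩)
    have hC1 : C.card = 2 * totalWeight G w - wDeg G w v - r := by
      rw [Finset.card_image_of_injective]
      · simp
      · intro k k' h
        by_contra hne
        exact hD v k k' hne h
    have hCd : Disjoint ((G.neighborFinset v).biUnion (S v)) C := by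
      refine Finset.disjoint_left.2 fun k hk hk' => ?_
      obtain ⟨u, -, hk⟩ := Finset.mem_biUnion.1 hk
      obtain ⟨-, e, x, -, hx, rfl⟩ := Finset.mem_filter.1 hk
      obtain ⟨j, -, hj⟩ := Finset.mem_image.1 hk'
      exact hC v e x j hx hj.symm
    have htot := Finset.card_le_univ ((G.neighborFinset v).biUnion (S v) ∪ C)
    rw [Finset.card_union_of_disjoint hCd, Finset.card_biUnion hdisj, hC1, Fintype.card_fin] at htot
    have hsum := Finset.sum_le_sum fun u (hu : u ∈ G.neighborFinset v) =>
      hσ v u ((G.mem_neighborFinset v u).1 hu)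
    rw [wDeg_add_out] at hsum
    have := hcap v
    omega

/-- `G` has an orientation in which every vertex has weighted outdegree at most `r` if
and only if `G'` has a proper coloring with `2T` colors. -/
theorem orientation_iff_coloring (r : ℕ)
    (hw : ∀ e ∈ G.edgeSet, 0 < w e)
    (hcap : ∀ v : V, wDeg G w v + r ≤ 2 * totalWeight G w) :
    (∃ σ : V → V → Bool,
      (∀ u v, G.Adj u v → σ u v = ! σ v u) ∧
      (∀ v : V, ∑ u ∈ G.neighborFinset v, (if σ v u then w s(v, u) else 0) ≤ r)) ↔
    (∃ c : RedVert G w r → Fin (2 * totalWeight G w),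
      ∀ u v, (colGraph G w r).Adj u v → c u ≠ c v) := by
  constructor
  · rintro ⟨σ, hσ, hout⟩
    exact exists_coloring G w r hcap σ hσ hout
  · rintro ⟨c, hc⟩
    exact exists_orientation G w r hw hcap c hc

end Reduction
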